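/- Let P_{kn} ⊂ Sp_{2kn} be the Siegel parabolic (stabilizer of the standard maximal isotropic subspace spanned by the first kn standard basis vectors, i.e., matrices of block form [[a, b],[0, â]]). Let γ_{r_1,...,r_{k−1}} be the representative matrix of Lemma 5.1 and m(h_0, g_1, ..., g_{k−1}) = diag(g_{k−1}, ..., g_1, h_0, ĝ_1, ..., ĝ_{k−1}) with h_0 ∈ P_n ⊂ Sp_{2n} and each g_i ∈ GL_n lower block-triangular of type B^−_{r_i,n}, i.e., matrices with a zero block of size (n−r_i)×r_i in the upper right. Then γ_{r_1,...,r_{k−1}} · m(h_0, g_1, ..., g_{k−1}) · γ_{r_1,...,r_{k−1}}^{-1} ∈ P_{kn}. -/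

import Mathlib

open Matrix

variable (F : Type*) [Field F]

/-- The `m × m` matrix with ones on the antidiagonal and zeros elsewhere. -/
def Jmat (m : ℕ) : Matrix (Fin m) (Fin m) F :=
  Matrix.of fun i j => if (i : ℕ) + (j : ℕ) + 1 = m then 1 else 0

/-- The matrix of the symplectic form `[[0, J_{kn}], [−J_{kn}, 0]]` defining `Sp_{2kn}`,
in `n`-block coordinates (index set `Fin (2k) × Fin n`). -/
def OmegaB (k n : ℕ) : Matrix (Fin (2 * k) × Fin n) (Fin (2 * k) × Fin n) F :=
  Matrix.of fun p q =>
    if (p.1 : ℕ) + (q.1 : ℕ) + 1 = 2 * k ∧ (p.2 : ℕ) + (q.2 : ℕ) + 1 = n then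
      (if (p.1 : ℕ) < k then 1 else -1)
    else 0

/-- `Sp_{2kn}(F)` in `n`-block coordinates. -/
def SpB (k n : ℕ) : Set (Matrix (Fin (2 * k) × Fin n) (Fin (2 * k) × Fin n) F) :=
  {g | IsUnit g ∧ gᵀ * OmegaB F k n * g = OmegaB F k n}

/-- The matrix of the symplectic form defining `Sp_{2n}` (halves indexed by `Fin n`). -/
def Omega2 (n : ℕ) : Matrix (Fin n ⊕ Fin n) (Fin n ⊕ Fin n) F :=
  fromBlocks 0 (Jmat F n) (-(Jmat F n)) 0

/-- `μ_r = diag(1_r, 0)`. -/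
def muB (n r : ℕ) : Matrix (Fin n) (Fin n) F :=
  Matrix.of fun a b => if a = b ∧ (a : ℕ) < r then 1 else 0

/-- `μ'_r = diag(0, 1_r)`. -/
def muB' (n r : ℕ) : Matrix (Fin n) (Fin n) F :=
  Matrix.of fun a b => if a = b ∧ n ≤ (a : ℕ) + r then 1 else 0

/-- `ε_r = [[0, 0], [1_{n−r}, 0]]`. -/
def epsB (n r : ℕ) : Matrix (Fin n) (Fin n) F :=
  Matrix.of fun a b => if r ≤ (a : ℕ) ∧ (a : ℕ) = (b : ℕ) + r then 1 else 0

/-- `ε'_r = [[0, −1_{n−r}], [0, 0]]`. -/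
def epsB' (n r : ℕ) : Matrix (Fin n) (Fin n) F :=
  Matrix.of fun a b => if (a : ℕ) + r < n ∧ (b : ℕ) = (a : ℕ) + r then -1 else 0

/-- The representative `γ_{r₁,…,r_{k−1}}` of Lemma 5.1 (the `0`-indexed function `rr` gives
`rr (i−1) = rᵢ`): block diagonal `μ'_{k−1}, …, μ'_1, 1_{2n}, μ_1, …, μ_{k−1}`, with
`ε'_t` at block `(k−1−t, k+t)` and `ε_t` at block `(k+t, k−1−t)` for `1 ≤ t ≤ k−1`. -/
def gammaR (k n : ℕ) (rr : ℕ → ℕ) :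
    Matrix (Fin (2 * k) × Fin n) (Fin (2 * k) × Fin n) F :=
  Matrix.of fun p q =>
    let i := (p.1 : ℕ); let j := (q.1 : ℕ)
    if i = j ∧ i + 2 ≤ k then muB' F n (rr (k - 2 - i)) p.2 q.2
    else if i = j ∧ (i + 1 = k ∨ i = k) then (if p.2 = q.2 then 1 else 0)
    else if i = j ∧ k + 1 ≤ i then muB F n (rr (i - (k + 1))) p.2 q.2
    else if i + j + 1 = 2 * k ∧ i + 2 ≤ k then epsB' F n (rr (k - 2 - i)) p.2 q.2
    else if i + j + 1 = 2 * k ∧ j + 2 ≤ k then epsB F n (rr (k - 2 - j)) p.2 q.2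
    else 0

/-- `ĝ = J_n (gᵀ)⁻¹ J_n`. -/
noncomputable def hatN (n : ℕ) (g : Matrix (Fin n) (Fin n) F) : Matrix (Fin n) (Fin n) F :=
  Jmat F n * (gᵀ)⁻¹ * Jmat F n

/-- `m(h₀, g₁, …, g_{k−1}) = diag(g_{k−1}, …, g₁, h₀, ĝ₁, …, ĝ_{k−1})` (the `0`-indexed
function `g` gives `g (i−1) = gᵢ`), with `h₀` a `2n × 2n` matrix occupying the central
two block rows and columns. -/
noncomputable def mLevi (k n : ℕ) (g : ℕ → Matrix (Fin n) (Fin n) F)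
    (h0 : Matrix (Fin n ⊕ Fin n) (Fin n ⊕ Fin n) F) :
    Matrix (Fin (2 * k) × Fin n) (Fin (2 * k) × Fin n) F :=
  Matrix.of fun p q =>
    let i := (p.1 : ℕ); let j := (q.1 : ℕ)
    if i = j ∧ i + 2 ≤ k then g (k - 2 - i) p.2 q.2
    else if i + 1 = k ∧ j + 1 = k then h0 (Sum.inl p.2) (Sum.inl q.2)
    else if i + 1 = k ∧ j = k then h0 (Sum.inl p.2) (Sum.inr q.2)
    else if i = k ∧ j + 1 = k then h0 (Sum.inr p.2) (Sum.inl q.2)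
    else if i = k ∧ j = k then h0 (Sum.inr p.2) (Sum.inr q.2)
    else if i = j ∧ k + 1 ≤ i then hatN F n (g (i - (k + 1))) p.2 q.2
    else 0


/-- The permutation underlying gamma, as a function. -/
def sgF (k n : ℕ) (rr : ℕ → ℕ) (hrr : ∀ t, rr t ≤ n) (p : Fin (2 * k) × Fin n) :
    Fin (2 * k) × Fin n :=
  if (p.1 : ℕ) + 2 ≤ k then
    (if h : (p.2 : ℕ) + rr (k - 2 - p.1) < n then (Fin.rev p.1, ⟨p.2 + rr (k - 2 - p.1), h⟩)
      else p)
  else if k + 1 ≤ (p.1 : ℕ) then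
    (if rr (p.1 - (k + 1)) ≤ (p.2 : ℕ) then
      (Fin.rev p.1, ⟨p.2 - rr (p.1 - (k + 1)), by have := p.2.2; omega⟩) else p)
  else p

/-- The sign. -/
def sgS (k n : ℕ) (rr : ℕ → ℕ) (p : Fin (2 * k) × Fin n) : F :=
  if (p.1 : ℕ) + 2 ≤ k ∧ (p.2 : ℕ) + rr (k - 2 - p.1) < n then -1 else 1

theorem gamma_eq (k n : ℕ) (rr : ℕ → ℕ) (hrr : ∀ t, rr t ≤ n) (p q : Fin (2 * k) × Fin n) :
    gammaR F k n rr p q = if q = sgF k n rr hrr p then sgS F k n rr p else 0 := by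
  obtain ⟨⟨i, hi⟩, ⟨a, ha⟩⟩ := p
  obtain ⟨⟨j, hj⟩, ⟨b, hb⟩⟩ := q
  have e1 : j + 2 ≤ k → i + j + 1 = 2 * k → rr (k - 2 - j) = rr (i - (k + 1)) := fun _ _ =>
    congrArg rr (by omega)
  have e2 : i + 2 ≤ k → i + j + 1 = 2 * k → rr (k - 2 - i) = rr (j - (k + 1)) := fun _ _ =>
    congrArg rr (by omega)
  have e3 : i = j → rr (k - 2 - i) = rr (k - 2 - j) := fun h => by rw [h]
  have e4 : i = j → rr (i - (k + 1)) = rr (j - (k + 1)) := fun h => by rw [h]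
  have h1 := hrr (k - 2 - i)
  have h2 := hrr (i - (k + 1))
  have h3 := hrr (k - 2 - j)
  have h4 := hrr (j - (k + 1))
  simp only [gammaR, sgF, sgS, muB, muB', epsB, epsB', of_apply, Fin.rev, Fin.mk.injEq]
  by_cases c1 : i + 2 ≤ k
  · by_cases c2 : a + rr (k - 2 - i) < n
    · simp only [c1, c2, and_true, and_self, true_and, ↓reduceIte, ↓reduceDIte, Prod.mk.injEq, Fin.mk.injEq]
      split_ifs <;> first | rfl | (exfalso; omega)
    · simp only [c1, c2, and_true, and_false, ↓reduceIte, ↓reduceDIte, Prod.mk.injEq, Fin.mk.injEq]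
      split_ifs <;> first | rfl | (exfalso; omega)
  · by_cases c3 : k + 1 ≤ i
    · by_cases c2 : rr (i - (k + 1)) ≤ a
      · simp only [c1, c2, c3, and_true, false_and, and_false, ↓reduceIte, ↓reduceDIte, Prod.mk.injEq, Fin.mk.injEq]
        split_ifs <;> first | rfl | (exfalso; omega)
      · simp only [c1, c2, c3, and_true, false_and, and_false, ↓reduceIte, ↓reduceDIte, Prod.mk.injEq, Fin.mk.injEq]
        split_ifs <;> first | rfl | (exfalso; omega)
    · simp only [c1, c3, and_true, false_and, and_false, ↓reduceIte, ↓reduceDIte, Prod.mk.injEq, Fin.mk.injEq]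
      split_ifs <;> first | rfl | (exfalso; omega)

theorem sgF_inj (k n : ℕ) (rr : ℕ → ℕ) (hrr : ∀ t, rr t ≤ n) :
    Function.Injective (sgF k n rr hrr) := by
  rintro ⟨⟨i, hi⟩, ⟨a, ha⟩⟩ ⟨⟨j, hj⟩, ⟨b, hb⟩⟩ h
  have e1 : j + 2 ≤ k → i + j + 1 = 2 * k → rr (k - 2 - j) = rr (i - (k + 1)) := fun _ _ =>
    congrArg rr (by omega)
  have e2 : i + 2 ≤ k → i + j + 1 = 2 * k → rr (k - 2 - i) = rr (j - (k + 1)) := fun _ _ =>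
    congrArg rr (by omega)
  have e3 : i = j → rr (k - 2 - i) = rr (k - 2 - j) := fun h => by rw [h]
  have e4 : i = j → rr (i - (k + 1)) = rr (j - (k + 1)) := fun h => by rw [h]
  have h1 := hrr (k - 2 - i)
  have h2 := hrr (i - (k + 1))
  have h3 := hrr (k - 2 - j)
  have h4 := hrr (j - (k + 1))
  simp only [sgF, Fin.rev] at h
  simp only [Prod.mk.injEq, Fin.mk.injEq]
  split_ifs at h <;> simp only [Prod.mk.injEq, Fin.mk.injEq] at h <;> omega

theorem gamma_conj (k n : ℕ) (rr : ℕ → ℕ) (hrr : ∀ t, rr t ≤ n)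
    (M : Matrix (Fin (2 * k) × Fin n) (Fin (2 * k) × Fin n) F) (p q : Fin (2 * k) × Fin n) :
    (gammaR F k n rr * M * (gammaR F k n rr)ᵀ) p q =
      sgS F k n rr p * M (sgF k n rr hrr p) (sgF k n rr hrr q) * sgS F k n rr q := by
  simp [Matrix.mul_apply, gamma_eq F k n rr hrr]

theorem gamma_orth (k n : ℕ) (rr : ℕ → ℕ) (hrr : ∀ t, rr t ≤ n) :
    gammaR F k n rr * (gammaR F k n rr)ᵀ = 1 := by
  ext p q
  have := gamma_conj F k n rr hrr 1 p q
  rw [mul_one] at this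
  rw [this, one_apply, one_apply]
  simp only [(sgF_inj k n rr hrr).eq_iff]
  split_ifs with h
  · subst h
    simp only [sgS]; split_ifs <;> simp
  · simp

theorem gamma_symp (k n : ℕ) (rr : ℕ → ℕ) (hrr : ∀ t, rr t ≤ n) :
    gammaR F k n rr * OmegaB F k n * (gammaR F k n rr)ᵀ = OmegaB F k n := by
  ext p q
  rw [gamma_conj F k n rr hrr]
  obtain ⟨⟨i, hi⟩, ⟨a, ha⟩⟩ := p
  obtain ⟨⟨j, hj⟩, ⟨b, hb⟩⟩ := q
  have e1 : j + 2 ≤ k → i + j + 1 = 2 * k → rr (k - 2 - j) = rr (i - (k + 1)) := fun _ _ =>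
    congrArg rr (by omega)
  have e2 : i + 2 ≤ k → i + j + 1 = 2 * k → rr (k - 2 - i) = rr (j - (k + 1)) := fun _ _ =>
    congrArg rr (by omega)
  have e3 : i = j → rr (k - 2 - i) = rr (k - 2 - j) := fun h => by rw [h]
  have e4 : i = j → rr (i - (k + 1)) = rr (j - (k + 1)) := fun h => by rw [h]
  have h1 := hrr (k - 2 - i)
  have h2 := hrr (i - (k + 1))
  have h3 := hrr (k - 2 - j)
  have h4 := hrr (j - (k + 1))
  simp only [OmegaB, of_apply, sgF, sgS, Fin.rev]
  by_cases c : i + j + 1 = 2 * k ∧ a + b + 1 = n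
  · rw [if_pos c]
    by_cases c1 : i < k
    · rw [if_pos c1]
      by_cases c2 : i + 2 ≤ k ∧ a + rr (k - 2 - i) < n
      · have d1 : ¬ (j + 2 ≤ k) := by omega
        have d2 : k + 1 ≤ j := by omega
        have d3 : rr (j - (k + 1)) ≤ b := by omega
        simp only [c2.1, c2.2, d1, d2, d3, and_true, false_and, ↓reduceIte, ↓reduceDIte]
        rw [if_pos (by omega), if_neg (by omega)]; simp
      · have d1 : ¬ (j + 2 ≤ k) := by omega
        have d2 : ¬ (k + 1 ≤ j ∧ rr (j - (k + 1)) ≤ b) := by omega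
        split_ifs <;> first | (exfalso; omega) | simp
    · rw [if_neg c1]
      by_cases c2 : j + 2 ≤ k ∧ b + rr (k - 2 - j) < n
      · have d1 : ¬ (i + 2 ≤ k) := by omega
        have d2 : k + 1 ≤ i := by omega
        have d3 : rr (i - (k + 1)) ≤ a := by omega
        simp only [c2.1, c2.2, d1, d2, d3, and_true, false_and, ↓reduceIte, ↓reduceDIte]
        rw [if_pos (by omega), if_pos (by omega)]; simp
      · have d1 : ¬ (i + 2 ≤ k) := by omega
        have d2 : ¬ (k + 1 ≤ i ∧ rr (i - (k + 1)) ≤ a) := by omega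
        split_ifs <;> first | (exfalso; omega) | simp
  · rw [if_neg c]
    have aux : ∀ x y z : F, y = 0 → x * y * z = 0 := by
      rintro x y z rfl; simp
    apply aux
    apply if_neg
    split_ifs <;> simp only [] <;> omega

theorem Jmat_sq (n : ℕ) : Jmat F n * Jmat F n = 1 := by
  ext a b
  have : ∀ x y : Fin n, Jmat F n x y = if y = Fin.rev x then 1 else 0 := by
    intro x y
    simp only [Jmat, of_apply, Fin.ext_iff, Fin.val_rev]
    congr 1
    ext; omega
  rw [Matrix.mul_apply]
  simp only [this, ite_mul, one_mul, zero_mul, Finset.sum_ite_eq', Finset.mem_univ, if_true, Fin.rev_rev,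
    one_apply, @eq_comm _ b a]

theorem Jmat_transpose (n : ℕ) : (Jmat F n)ᵀ = Jmat F n := by
  ext a b
  simp only [Jmat, transpose_apply, of_apply, add_comm]

theorem Jmul (n : ℕ) (A : Matrix (Fin n) (Fin n) F) (a b) :
    (Jmat F n * A * Jmat F n) a b = A (Fin.rev a) (Fin.rev b) := by
  have h1 : ∀ x y : Fin n, Jmat F n x y = if y = Fin.rev x then 1 else 0 := by
    intro x y
    simp only [Jmat, of_apply, Fin.ext_iff, Fin.val_rev]
    congr 1
    ext; omega
  have h2 : ∀ x y : Fin n, Jmat F n x y = if x = Fin.rev y then 1 else 0 := by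
    intro x y
    simp only [Jmat, of_apply, Fin.ext_iff, Fin.val_rev]
    congr 1
    ext; omega
  rw [Matrix.mul_apply]
  simp only [h2 _ b]
  simp [Matrix.mul_apply, h1]

/-- Blocks of the Levi element. -/
noncomputable def mBk (k n : ℕ) (g : ℕ → Matrix (Fin n) (Fin n) F)
    (h0 : Matrix (Fin n ⊕ Fin n) (Fin n ⊕ Fin n) F) (i j : ℕ) : Matrix (Fin n) (Fin n) F :=
  if i = j ∧ i + 2 ≤ k then g (k - 2 - i)
    else if i + 1 = k ∧ j + 1 = k then h0.toBlocks₁₁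
    else if i + 1 = k ∧ j = k then h0.toBlocks₁₂
    else if i = k ∧ j + 1 = k then h0.toBlocks₂₁
    else if i = k ∧ j = k then h0.toBlocks₂₂
    else if i = j ∧ k + 1 ≤ i then hatN F n (g (i - (k + 1)))
    else 0

theorem mLevi_apply (k n : ℕ) (g : ℕ → Matrix (Fin n) (Fin n) F)
    (h0 : Matrix (Fin n ⊕ Fin n) (Fin n ⊕ Fin n) F) (p q) :
    mLevi F k n g h0 p q = mBk F k n g h0 p.1 q.1 p.2 q.2 := by
  simp only [mLevi, mBk, of_apply]
  split_ifs <;> rfl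

theorem block_expand (k n : ℕ) (M : Matrix (Fin (2 * k) × Fin n) (Fin (2 * k) × Fin n) F)
    (B : ℕ → ℕ → Matrix (Fin n) (Fin n) F) (hM : ∀ p q, M p q = B p.1 q.1 p.2 q.2) (p q) :
    (Mᵀ * OmegaB F k n * M) p q = ∑ l : Fin (2 * k), (if (l : ℕ) < k then 1 else -1) *
      ((B l p.1)ᵀ * Jmat F n * B (Fin.rev l) q.1) p.2 q.2 := by
  have hO : ∀ (x y : Fin (2 * k) × Fin n), OmegaB F k n x y =
      if y = (Fin.rev x.1, Fin.rev x.2) then (if (x.1 : ℕ) < k then 1 else -1) else 0 := by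
    intro x y
    simp only [OmegaB, of_apply, Prod.ext_iff, Fin.ext_iff, Fin.val_rev]
    congr 1
    ext; omega
  have h1 : ∀ x y : Fin n, Jmat F n x y = if y = Fin.rev x then 1 else 0 := by
    intro x y
    simp only [Jmat, of_apply, Fin.ext_iff, Fin.val_rev]
    congr 1
    ext; omega
  rw [Matrix.mul_assoc, Matrix.mul_apply, Fintype.sum_prod_type]
  refine Finset.sum_congr rfl fun l _ => ?_
  rw [Matrix.mul_assoc, Matrix.mul_apply, Finset.mul_sum]
  refine Finset.sum_congr rfl fun a _ => ?_
  rw [Matrix.mul_apply, Matrix.mul_apply]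
  simp only [hO, h1, transpose_apply, hM, ite_mul, Finset.sum_ite_eq', Finset.sum_ite_eq,
    Finset.mem_univ, if_true, zero_mul]
  split_ifs <;> simp

theorem hatN_J (n : ℕ) (g : Matrix (Fin n) (Fin n) F) (hg : IsUnit g) :
    gᵀ * Jmat F n * hatN F n g = Jmat F n := by
  have : IsUnit gᵀ.det := by rw [det_transpose]; exact (isUnit_iff_isUnit_det _).1 hg
  calc gᵀ * Jmat F n * hatN F n g
      = gᵀ * (Jmat F n * Jmat F n) * (gᵀ)⁻¹ * Jmat F n := by
        simp only [hatN, Matrix.mul_assoc]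
    _ = Jmat F n := by rw [Jmat_sq, mul_one, mul_nonsing_inv _ this, one_mul]

theorem hatN_J' (n : ℕ) (g : Matrix (Fin n) (Fin n) F) (hg : IsUnit g) :
    (hatN F n g)ᵀ * Jmat F n * g = Jmat F n := by
  have := congrArg transpose (hatN_J F n g hg)
  simpa [transpose_mul, Jmat_transpose, Matrix.mul_assoc] using this

theorem mLevi_symp (k n : ℕ) (hk : 2 ≤ k)
    (g : ℕ → Matrix (Fin n) (Fin n) F) (hg : ∀ t, IsUnit (g t))
    (h0 : Matrix (Fin n ⊕ Fin n) (Fin n ⊕ Fin n) F)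
    (hh0 : h0ᵀ * Omega2 F n * h0 = Omega2 F n)
    (hh0P : h0.toBlocks₂₁ = 0) :
    (mLevi F k n g h0)ᵀ * OmegaB F k n * mLevi F k n g h0 = OmegaB F k n := by
  have hb : h0 = fromBlocks h0.toBlocks₁₁ h0.toBlocks₁₂ 0 h0.toBlocks₂₂ := by
    rw [← hh0P, fromBlocks_toBlocks]
  rw [hb] at hh0
  simp only [Omega2, fromBlocks_transpose, fromBlocks_multiply, fromBlocks_inj] at hh0
  simp only [Matrix.mul_zero, Matrix.zero_mul, transpose_zero, zero_add, add_zero,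
    Matrix.mul_neg, Matrix.neg_mul, neg_inj, neg_zero] at hh0
  obtain ⟨-, hA, hD, hBD⟩ := hh0
  ext ⟨⟨i, hi⟩, a⟩ ⟨⟨j, hj⟩, b⟩
  rw [block_expand F k n _ _ (mLevi_apply F k n g h0)]
  have hz : ∀ i j : ℕ, i ≠ j → ¬ (i + 1 = k ∧ j = k) → mBk F k n g h0 i j = 0 := by
    intro i j h1 h2
    simp only [mBk, hh0P]
    split_ifs <;> first | rfl | (exfalso; omega)
  have hO : OmegaB F k n (⟨i, hi⟩, a) (⟨j, hj⟩, b) =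
      if i + j + 1 = 2 * k then (if i < k then 1 else -1) * Jmat F n a b else 0 := by
    simp only [OmegaB, Jmat, of_apply]
    split_ifs <;> first | (exfalso; omega) | simp
  rw [hO]
  simp only [Fin.val_rev]
  by_cases c : i = k ∧ j = k
  · obtain ⟨rfl, rfl⟩ := c
    rw [if_neg (by omega)]
    rw [Fintype.sum_eq_add (⟨j, by omega⟩ : Fin (2 * j)) ⟨j - 1, by omega⟩
      (by simp only [ne_eq, Fin.mk.injEq]; omega)]
    · have m1 : mBk F j n g h0 j j = h0.toBlocks₂₂ := by
        simp only [mBk, true_and, and_true]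
        split_ifs <;> first | rfl | (exfalso; omega)
      have m2 : mBk F j n g h0 (j - 1) j = h0.toBlocks₁₂ := by
        simp only [mBk, true_and, and_true]
        split_ifs <;> first | rfl | (exfalso; omega)
      have t1 : 2 * j - (j + 1) = j - 1 := by omega
      have t2 : 2 * j - (j - 1 + 1) = j := by omega
      simp only [t1, t2, m1, m2]
      rw [if_neg (by omega), if_pos (by omega)]
      have := congrFun (congrFun hBD a) b
      simpa using this
    · rintro ⟨l, hl⟩ ⟨h1, h2⟩
      simp only [ne_eq, Fin.mk.injEq] at h1 h2
      rw [hz l j h1 (by omega)]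
      simp
  · by_cases ci : i = k
    · rw [Fintype.sum_eq_single (⟨2 * k - (j + 1), by omega⟩ : Fin (2 * k))]
      · have t1 : 2 * k - (2 * k - (j + 1) + 1) = j := by omega
        simp only [t1]
        by_cases cj : j + 1 = k
        · have m1 : mBk F k n g h0 (2 * k - (j + 1)) i = h0.toBlocks₂₂ := by
            simp only [mBk, true_and, and_true]
            split_ifs <;> first | rfl | (exfalso; omega)
          have m2 : mBk F k n g h0 j j = h0.toBlocks₁₁ := by
            simp only [mBk, true_and, and_true]
            split_ifs <;> first | rfl | (exfalso; omega)
          rw [m1, m2, hD, if_neg (by omega), if_pos (by omega), if_neg (by omega)]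
        · rw [if_neg (by omega : ¬ (i + j + 1 = 2 * k))]
          rw [hz (2 * k - (j + 1)) i (by omega) (by omega)]
          simp
      · rintro ⟨l, hl⟩ h1
        simp only [ne_eq, Fin.mk.injEq] at h1 ⊢
        rw [hz (2 * k - (l + 1)) j (by omega) (by omega)]
        simp
    · rw [Fintype.sum_eq_single (⟨i, hi⟩ : Fin (2 * k))]
      · simp only []
        by_cases c2 : i + j + 1 = 2 * k
        · rw [if_pos c2]
          have t : 2 * k - (i + 1) = j := by omega
          rw [t]
          congr 1
          refine congrFun (congrFun ?_ a) b
          by_cases c3 : i + 2 ≤ k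
          · have m1 : mBk F k n g h0 i i = g (k - 2 - i) := by
              simp only [mBk, true_and, and_true]
              split_ifs <;> first | rfl | (exfalso; omega)
            have m2 : mBk F k n g h0 j j = hatN F n (g (k - 2 - i)) := by
              have : k - 2 - i = j - (k + 1) := by omega
              rw [this]
              simp only [mBk, true_and, and_true]
              split_ifs <;> first | rfl | (exfalso; omega)
            rw [m1, m2, hatN_J F n _ (hg _)]
          · by_cases c4 : i + 1 = k
            · have m1 : mBk F k n g h0 i i = h0.toBlocks₁₁ := by
                simp only [mBk, true_and, and_true]
                split_ifs <;> first | rfl | (exfalso; omega)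
              have m2 : mBk F k n g h0 j j = h0.toBlocks₂₂ := by
                simp only [mBk, true_and, and_true]
                split_ifs <;> first | rfl | (exfalso; omega)
              rw [m1, m2, hA]
            · have m1 : mBk F k n g h0 j j = g (k - 2 - j) := by
                simp only [mBk, true_and, and_true]
                split_ifs <;> first | rfl | (exfalso; omega)
              have m2 : mBk F k n g h0 i i = hatN F n (g (k - 2 - j)) := by
                have : k - 2 - j = i - (k + 1) := by omega
                rw [this]
                simp only [mBk, true_and, and_true]
                split_ifs <;> first | rfl | (exfalso; omega)
              rw [m1, m2, hatN_J' F n _ (hg _)]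
        · rw [if_neg c2, hz (2 * k - (i + 1)) j (by omega) (by omega)]
          simp
      · rintro ⟨l, hl⟩ h1
        simp only [ne_eq, Fin.mk.injEq] at h1 ⊢
        rw [hz l i h1 (by omega)]
        simp

/-- Vanishing of the inverse on the same block. -/
theorem inv_block (n r : ℕ) (g : Matrix (Fin n) (Fin n) F) (hg : IsUnit g)
    (h : ∀ a b : Fin n, (a : ℕ) + r < n → n ≤ (b : ℕ) + r → g a b = 0) :
    ∀ a b : Fin n, (a : ℕ) + r < n → n ≤ (b : ℕ) + r → g⁻¹ a b = 0 := by
  have : Invertible g := hg.invertible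
  have hb : BlockTriangular gᵀ (fun a : Fin n => decide (n ≤ (a : ℕ) + r)) := by
    intro a b hab
    simp only [Bool.lt_iff, decide_eq_true_eq, decide_eq_false_iff_not] at hab
    exact h b a (by omega) (by omega)
  have : Invertible gᵀ := inferInstance
  have hb' := blockTriangular_inv_of_blockTriangular hb
  intro a b ha hb
  have := @hb' b a (by
    simp only [Bool.lt_iff, decide_eq_true_eq, decide_eq_false_iff_not]; omega)
  rwa [← transpose_nonsing_inv] at this

theorem gm_zero (k n : ℕ) (rr : ℕ → ℕ) (hrr : ∀ t, rr t ≤ n)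
    (g : ℕ → Matrix (Fin n) (Fin n) F) (hg : ∀ t, IsUnit (g t))
    (hgB : ∀ t, t + 1 ≤ k - 1 → ∀ a b : Fin n,
      (a : ℕ) + rr t < n → n ≤ (b : ℕ) + rr t → g t a b = 0)
    (h0 : Matrix (Fin n ⊕ Fin n) (Fin n ⊕ Fin n) F)
    (hh0P : h0.toBlocks₂₁ = 0) (p q : Fin (2 * k) × Fin n) (hp : k ≤ (p.1 : ℕ))
    (hq : (q.1 : ℕ) < k) :
    mLevi F k n g h0 (sgF k n rr hrr p) (sgF k n rr hrr q) = 0 := by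
  have hp' : ∀ s, s = sgF k n rr hrr p → (s.1 : ℕ) = k ∨
      (k + 1 ≤ (s.1 : ℕ) ∧ (s.2 : ℕ) < rr (s.1 - (k + 1))) ∨
      ((s.1 : ℕ) + 2 ≤ k ∧ (s.2 : ℕ) + rr (k - 2 - s.1) < n) := by
    rintro s rfl
    obtain ⟨⟨i, hi⟩, ⟨a, ha⟩⟩ := p
    have e : k + 1 ≤ i → rr (k - 2 - (2 * k - (i + 1))) = rr (i - (k + 1)) := fun _ =>
      congrArg rr (by omega)
    simp only at hp
    simp only [sgF, Fin.rev]
    split_ifs <;> simp only [] <;> omega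
  have hq' : ∀ s, s = sgF k n rr hrr q → (s.1 : ℕ) + 1 = k ∨
      (k + 1 ≤ (s.1 : ℕ) ∧ rr (s.1 - (k + 1)) ≤ (s.2 : ℕ)) ∨
      ((s.1 : ℕ) + 2 ≤ k ∧ n ≤ (s.2 : ℕ) + rr (k - 2 - s.1)) := by
    rintro s rfl
    obtain ⟨⟨i, hi⟩, ⟨a, ha⟩⟩ := q
    have e : i + 2 ≤ k → rr (2 * k - (i + 1) - (k + 1)) = rr (k - 2 - i) := fun _ =>
      congrArg rr (by omega)
    simp only at hq
    simp only [sgF, Fin.rev]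
    split_ifs <;> simp only [] <;> omega
  have hp2 := hp' _ rfl
  have hq2 := hq' _ rfl
  rw [mLevi_apply]
  generalize sgF k n rr hrr p = s at *
  generalize sgF k n rr hrr q = t at *
  obtain ⟨⟨i, hi⟩, a⟩ := s
  obtain ⟨⟨j, hj⟩, b⟩ := t
  have e3 : i = j → rr (k - 2 - i) = rr (k - 2 - j) := fun h => by rw [h]
  have e4 : i = j → rr (i - (k + 1)) = rr (j - (k + 1)) := fun h => by rw [h]
  simp only [mBk, hh0P] at hp2 hq2 ⊢
  split_ifs with c1 c2 c3 c4 c5 c6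
  · exact hgB _ (by omega) a b (by omega) (by omega)
  · exfalso; omega
  · exfalso; omega
  · rfl
  · exfalso; omega
  · rw [hatN, Jmul, ← transpose_nonsing_inv, transpose_apply]
    have h1 := hrr (i - (k + 1))
    refine inv_block F n (rr (i - (k + 1))) (g _) (hg _) (hgB _ (by omega)) _ _ ?_ ?_
    · rw [Fin.val_rev]; omega
    · rw [Fin.val_rev]; omega
  · rfl

/-- Let `h₀ ∈ P_n ⊂ Sp_{2n}` (Siegel parabolic: symplectic with vanishing lower-left
block) and for `1 ≤ i ≤ k−1` let `gᵢ ∈ B⁻_{rᵢ,n} ∩ GL_n(F)` (invertible with vanishing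
upper-right `(n−rᵢ) × rᵢ` block). Then
`γ_{r₁,…,r_{k−1}} · m(h₀, g₁, …, g_{k−1}) · γ_{r₁,…,r_{k−1}}⁻¹` belongs to the Siegel
parabolic `P_{kn}` of `Sp_{2kn}`: it is symplectic and its lower-left `kn × kn` block
vanishes. -/
theorem stmt19 (k n : ℕ) (hk : 2 ≤ k) (hn : 0 < n)
    (rr : ℕ → ℕ) (hrr : ∀ t, rr t ≤ n)
    (g : ℕ → Matrix (Fin n) (Fin n) F) (hg : ∀ t, IsUnit (g t))
    (hgB : ∀ t, t + 1 ≤ k - 1 → ∀ a b : Fin n,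
      (a : ℕ) + rr t < n → n ≤ (b : ℕ) + rr t → g t a b = 0)
    (h0 : Matrix (Fin n ⊕ Fin n) (Fin n ⊕ Fin n) F)
    (hh0 : IsUnit h0 ∧ h0ᵀ * Omega2 F n * h0 = Omega2 F n)
    (hh0P : h0.toBlocks₂₁ = 0) :
    gammaR F k n rr * mLevi F k n g h0 * (gammaR F k n rr)⁻¹ ∈ SpB F k n ∧
    ∀ p q : Fin (2 * k) × Fin n, k ≤ (p.1 : ℕ) → (q.1 : ℕ) < k →
      (gammaR F k n rr * mLevi F k n g h0 * (gammaR F k n rr)⁻¹) p q = 0 := by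
  have hG := gamma_orth F k n rr hrr
  have hG' : (gammaR F k n rr)ᵀ * gammaR F k n rr = 1 := mul_eq_one_comm.1 hG
  have hinv : (gammaR F k n rr)⁻¹ = (gammaR F k n rr)ᵀ := inv_eq_right_inv hG
  have hS := gamma_symp F k n rr hrr
  have hM := mLevi_symp F k n hk g hg h0 hh0.2 hh0P
  have hO : OmegaB F k n * -OmegaB F k n = 1 := by
    have hO' : ∀ (x y : Fin (2 * k) × Fin n), OmegaB F k n x y =
        if y = (Fin.rev x.1, Fin.rev x.2) then (if (x.1 : ℕ) < k then 1 else -1) else 0 := by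
      intro x y
      simp only [OmegaB, of_apply, Prod.ext_iff, Fin.ext_iff, Fin.val_rev]
      congr 1
      ext; omega
    ext x y
    rw [Matrix.mul_apply]
    simp only [hO' x, ite_mul, zero_mul, Finset.sum_ite_eq', Finset.sum_ite_eq, Finset.mem_univ,
      if_true, Matrix.neg_apply, hO', Fin.rev_rev, Fin.val_rev, one_apply, Prod.mk.eta, @eq_comm _ x y]
    have := x.1.2
    split_ifs <;> first | (exfalso; omega) | simp
  rw [hinv]
  refine ⟨?_, fun p q hp hq => ?_⟩
  · have hX : (gammaR F k n rr * mLevi F k n g h0 * (gammaR F k n rr)ᵀ)ᵀ * OmegaB F k n *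
        (gammaR F k n rr * mLevi F k n g h0 * (gammaR F k n rr)ᵀ) = OmegaB F k n := by
      have hS' : (gammaR F k n rr)ᵀ * OmegaB F k n * gammaR F k n rr = OmegaB F k n := by
        calc _ = (gammaR F k n rr)ᵀ * (gammaR F k n rr * OmegaB F k n * (gammaR F k n rr)ᵀ)
              * gammaR F k n rr := by rw [hS]
          _ = ((gammaR F k n rr)ᵀ * gammaR F k n rr) * OmegaB F k n *
              ((gammaR F k n rr)ᵀ * gammaR F k n rr) := by simp only [Matrix.mul_assoc]
          _ = _ := by rw [hG', one_mul, mul_one]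
      calc _ = gammaR F k n rr * ((mLevi F k n g h0)ᵀ *
              ((gammaR F k n rr)ᵀ * OmegaB F k n * gammaR F k n rr) * mLevi F k n g h0)
              * (gammaR F k n rr)ᵀ := by
            simp only [transpose_mul, transpose_transpose, Matrix.mul_assoc]
        _ = _ := by rw [hS', hM, hS]
    refine ⟨?_, hX⟩
    refine IsUnit.of_mul_eq_one_right (-OmegaB F k n * ((gammaR F k n rr * mLevi F k n g h0 * (gammaR F k n rr)ᵀ)ᵀ * OmegaB F k n)) ?_
    rw [Matrix.mul_assoc, hX]
    exact mul_eq_one_comm.1 hO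
  · rw [gamma_conj F k n rr hrr, gm_zero F k n rr hrr g hg hgB h0 hh0P p q hp hq]
    simp
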